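/- There exists a 33×33 matrix with all entries equal to 1 or -1 whose determinant equals 2^32 · 8^14 · 441. Consequently md(33) ≥ 2^32 · 8^14 · 441. -/

import Mathlib

/-- `md n` is the maximal determinant of an `n × n` matrix all of whose
entries are `1` or `-1`. -/
noncomputable def md (n : ℕ) : ℤ :=
  sSup {d : ℤ | ∃ M : Matrix (Fin n) (Fin n) ℤ,
    (∀ i j, M i j = 1 ∨ M i j = -1) ∧ M.det = d}

/-!
Negating a matrix of odd order negates its determinant, so it suffices to compute
`det M ^ 2 = det (M * Mᵀ)`. For the matrix `M` used here, `M * Mᵀ` is `32 • 1` plus a matrix whose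
entries depend only on the classes of the row and column indices in a partition into six classes.
Such a perturbation factors through a six-dimensional space, so by Sylvester's determinant identity
`det (M * Mᵀ)` is `32 ^ 27` times a `6 × 6` determinant.
-/

open Matrix
open scoped Nat

section BlowUp

variable {m n R : Type*} [DecidableEq n]

theorem submatrix_eq_mul_mul [Fintype n] [NonAssocSemiring R]
    (B : Matrix n n R) (π : m → n) :
    B.submatrix π π =
      (1 : Matrix n n R).submatrix π id * (B * (1 : Matrix n n R).submatrix id π) := by
  ext i j
  simp [mul_apply, one_apply]

theorem det_smul_one_add_mul_comm_of_le [Fintype m] [DecidableEq m] [Fintype n] [CommRing R]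
    (A : Matrix m n R) (B : Matrix n m R) (x : R) (hle : Fintype.card n ≤ Fintype.card m) :
    (x • (1 : Matrix m m R) + A * B).det =
      x ^ (Fintype.card m - Fintype.card n) * (x • (1 : Matrix n n R) + B * A).det := by
  have key := congrArg (Polynomial.eval x) (charpoly_mul_comm_of_le (-A) B hle)
  simpa only [Polynomial.eval_mul, Polynomial.eval_pow, Polynomial.eval_X, eval_charpoly,
    scalar_apply, ← smul_one_eq_diagonal, Matrix.neg_mul, Matrix.mul_neg, sub_neg_eq_add] using key

theorem one_submatrix_mul_one_submatrix [Fintype m] [NonAssocSemiring R] (π : m → n) :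
    (1 : Matrix n n R).submatrix id π * (1 : Matrix n n R).submatrix π id =
      diagonal fun c => (Fintype.card {i // π i = c} : R) := by
  ext c d
  rcases eq_or_ne c d with rfl | hcd
  · simp [mul_apply, one_apply, Fintype.card_subtype, ← ite_and, eq_comm]
  · have no_common_fiber (i : m) : ¬ (π i = d ∧ c = π i) := fun h => hcd (h.2.trans h.1)
    simp [mul_apply, one_apply, hcd, ← ite_and, no_common_fiber]

theorem det_smul_one_add_submatrix [Fintype m] [DecidableEq m] [Fintype n] [CommRing R]
    (B : Matrix n n R) (π : m → n) (x : R) (hle : Fintype.card n ≤ Fintype.card m) :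
    (x • (1 : Matrix m m R) + B.submatrix π π).det =
      x ^ (Fintype.card m - Fintype.card n) *
        (x • (1 : Matrix n n R) +
          B * diagonal fun c => (Fintype.card {i // π i = c} : R)).det := by
  rw [submatrix_eq_mul_mul, det_smul_one_add_mul_comm_of_le _ _ _ hle, Matrix.mul_assoc,
    one_submatrix_mul_one_submatrix]

end BlowUp

/-- A matrix all of whose entries are `1` or `-1`. -/
def IsSignMatrix {n R : Type*} [One R] [Neg R] (M : Matrix n n R) : Prop :=
  ∀ i j, M i j = 1 ∨ M i j = -1

namespace IsSignMatrix

theorem neg {n R : Type*} [One R] [InvolutiveNeg R] {M : Matrix n n R} (hM : IsSignMatrix M) :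
    IsSignMatrix (-M) := fun i j =>
  (hM i j).symm.imp neg_eq_iff_eq_neg.mpr (congrArg Neg.neg)

theorem exists_det_eq_of_det_sq_eq {n R : Type*} [Fintype n] [DecidableEq n] [CommRing R]
    [NoZeroDivisors R] {M : Matrix n n R} (hM : IsSignMatrix M) (hn : Odd (Fintype.card n))
    {d : R} (hd : M.det ^ 2 = d ^ 2) : ∃ N : Matrix n n R, IsSignMatrix N ∧ N.det = d := by
  rcases eq_or_eq_neg_of_sq_eq_sq _ _ hd with h | h
  · exact ⟨M, hM, h⟩
  · exact ⟨-M, hM.neg, by rw [det_neg, hn.neg_one_pow, h, neg_one_mul, neg_neg]⟩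

theorem det_le_factorial {n : Type*} [Fintype n] [DecidableEq n] {M : Matrix n n ℤ}
    (hM : IsSignMatrix M) : M.det ≤ (Fintype.card n)! := by
  have entry_abs_le (i j) : AbsoluteValue.abs (M i j) ≤ 1 := by
    rcases hM i j with h | h <;> simp [h]
  simpa using (le_abs_self _).trans (det_le entry_abs_le)

theorem det_le_md {n : ℕ} {M : Matrix (Fin n) (Fin n) ℤ} (hM : IsSignMatrix M) :
    M.det ≤ md n :=
  le_csSup ⟨_, by rintro _ ⟨N, hN, rfl⟩; exact det_le_factorial hN⟩ ⟨M, hM, rfl⟩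

end IsSignMatrix

/-- The sign matrix whose `i`-th row is given by the `n` decimal digits of `rows i`, read from left
to right: the digit `1` stands for the entry `1`, any other digit (in particular `0`) for `-1`. -/
def signMatrixOfDigits {n : ℕ} (rows : Fin n → ℕ) : Matrix (Fin n) (Fin n) ℤ :=
  of fun i j => if rows i / 10 ^ (j.rev : ℕ) % 10 = 1 then 1 else -1

theorem isSignMatrix_signMatrixOfDigits {n : ℕ} (rows : Fin n → ℕ) :
    IsSignMatrix (signMatrixOfDigits rows) := fun _ _ => ite_eq_or_eq _ _ _

/-- A sign matrix of order 33 with large determinant. Its rows and columns have been ordered and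
negated so that its Gram matrix takes the block form of `largeDetMatrix_mul_transpose`. -/
def largeDetMatrix : Matrix (Fin 33) (Fin 33) ℤ :=
  signMatrixOfDigits ![
    110111100000001111111111111111111,
    100000011111111111111111111111111,
    001111110101110111001110111110110,
    101111110110100000111101110111001,
    101111101011011100010100011011111,
    101111111100101111110011001000101,
    101111101011011011101011100101010,
    011010111001111000111111111000011,
    010111011110111111011100100001011,
    010111011110111000100011011111110,
    011100111111001110111110001111000,
    011101001111010011111001111010101,
    011001101111101101000111110101101,
    011010110011110111110001000111111,
    111011000111101101111010010010010,
    111101010001111110101101010001100,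
    111011001010110110001111001110001,
    111001111100010011100110010011011,
    110101111011100010011010010100111,
    111010111010101011001000111011100,
    111011001101100010110100101101110,
    111100100110110110010011111001010,
    110101111011100101100101101010010,
    110011110111011110100000111100001,
    110110101101111011010101010110000,
    110011111101010100011011100011100,
    111101010001111001010010101111001,
    111100101100111100101000100110111,
    111110011010010101110110110100100,
    111110011101000101001001011101011,
    111110010111001010000111100010111,
    110110100111110001101110001001101,
    111001110110011001011101001100110]

/-- The partition of the rows of `largeDetMatrix` into classes of sizes 1, 1, 1, 4, 7 and 19 along
which its Gram matrix is constant off the diagonal. -/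
def gramClass : Fin 33 → Fin 6 :=
  ![0, 1, 2, 3, 3, 3, 3, 4, 4, 4, 4, 4, 4, 4,
    5, 5, 5, 5, 5, 5, 5, 5, 5, 5, 5, 5, 5, 5, 5, 5, 5, 5, 5]

/-- The inner products of distinct rows of `largeDetMatrix`, as a function of their classes. -/
def gramBlock : Matrix (Fin 6) (Fin 6) ℤ :=
  !![1, 9, 5, 5, 1, 1;
     9, 1, 5, 1, 5, 1;
     5, 5, 1, 1, 1, 1;
     5, 1, 1, 1, 1, 1;
     1, 5, 1, 1, 1, 1;
     1, 1, 1, 1, 1, 1]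

theorem largeDetMatrix_mul_transpose :
    largeDetMatrix * largeDetMatrixᵀ = (32 : ℤ) • 1 + gramBlock.submatrix gramClass gramClass := by
  decide +kernel

theorem det_gramBlock_quotient :
    ((32 : ℤ) • 1 + gramBlock * diagonal ![1, 1, 1, 4, 7, 19]).det = 2 ^ 13 * 441 ^ 2 := by
  decide +kernel

theorem det_largeDetMatrix_sq : largeDetMatrix.det ^ 2 = (2 ^ 32 * 8 ^ 14 * 441) ^ 2 := by
  have fiber_sizes : (fun c => (Fintype.card {i // gramClass i = c} : ℤ)) =
      ![1, 1, 1, 4, 7, 19] := by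
    decide +kernel
  calc
    largeDetMatrix.det ^ 2 = (largeDetMatrix * largeDetMatrixᵀ).det := by
      rw [det_mul, det_transpose, sq]
    _ = ((32 : ℤ) • 1 + gramBlock.submatrix gramClass gramClass).det := by
      rw [largeDetMatrix_mul_transpose]
    _ = 32 ^ 27 * ((32 : ℤ) • 1 + gramBlock * diagonal ![1, 1, 1, 4, 7, 19]).det := by
      rw [det_smul_one_add_submatrix _ _ _ (by simp), fiber_sizes, Fintype.card_fin,
        Fintype.card_fin]
    _ = (2 ^ 32 * 8 ^ 14 * 441) ^ 2 := by
      rw [det_gramBlock_quotient]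
      norm_num

theorem stmt_5 :
    (∃ M : Matrix (Fin 33) (Fin 33) ℤ,
      (∀ i j, M i j = 1 ∨ M i j = -1) ∧ M.det = 2^32 * 8^14 * 441) ∧
    (2^32 * 8^14 * 441 : ℤ) ≤ md 33 := by
  obtain ⟨M, hM, hdet⟩ := (isSignMatrix_signMatrixOfDigits _).exists_det_eq_of_det_sq_eq
    (by decide) det_largeDetMatrix_sq
  exact ⟨⟨M, hM, hdet⟩, hdet ▸ hM.det_le_md⟩
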